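/- arXiv:1904.08568 — 3 statements merged into one kernel-verified Lean document; each statement's English description precedes it below -/
import Mathlib

section
/- For every integer m ≥ 0 and every η ∈ (0,π), the function h_m satisfies the eigenfunction equation h_m''(η) + 6·cot(η)·h_m'(η) = −m(m+6)·h_m(η); that is, h_m is an eigenfunction of the radial Laplacian of the round sphere S^7 with eigenvalue −m(m+6). -/
open Real MeasureTheory Filter Topology

/-- Jacobi polynomial `P_k^{3,b}` (with `b = m+3` octonionic, `b = m+1` quaternionic),
given by the polynomial extension of the Rodrigues formula. -/
noncomputable def jacP (k b : ℕ) : Polynomial ℝ :=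
  Polynomial.C ((-1 : ℝ) ^ k / (2 ^ k * (Nat.factorial k : ℝ))) *
    (Polynomial.derivative^[k]
        ((1 - Polynomial.X) ^ (k + 3) * (1 + Polynomial.X) ^ (b + k)) /
      ((1 - Polynomial.X) ^ 3 * (1 + Polynomial.X) ^ b))

/-- Normalized eigenfunction `h_m` of the radial Laplacian on `S^7`. -/
noncomputable def hOct (m : ℕ) (η : ℝ) : ℝ :=
  (Real.Gamma (7 / 2) / (Real.sqrt π * Real.Gamma 3)) *
    ∫ φ in (0 : ℝ)..π,
      (((Real.cos η : ℂ) + Complex.I * ((Real.sin η * Real.cos φ : ℝ) : ℂ)) ^ m).re *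
        (Real.sin φ) ^ 5

/-- Coefficient `α_{k,m}`. -/
noncomputable def alphOct (k m : ℕ) : ℝ :=
  (96 / π ^ 8) * (m + 3) * (2 * k + m + 7) *
    (Nat.choose (k + m + 6) (k + m + 3)) * (Nat.choose (m + 5) m)

/-- Subelliptic heat kernel of the octonionic Hopf fibration, in cylindric coordinates. -/
noncomputable def pOct (t r η : ℝ) : ℝ :=
  ∑' m : ℕ, ∑' k : ℕ,
    alphOct k m * hOct m η * Real.exp (-(4 * ((k * (k + m + 7) + 2 * m : ℕ) : ℝ)) * t) *
      (Real.cos r) ^ m * (jacP k (m + 3)).eval (Real.cos (2 * r))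

/-- Coefficient `β_{k,m}` of the quaternionic heat kernel. -/
noncomputable def betQ (k m : ℕ) : ℝ :=
  (Real.Gamma 4 / (2 * π ^ 6)) * (2 * k + m + 5) * (m + 1) *
    (Nat.choose (k + m + 4) (k + m + 1))

/-- Subelliptic heat kernel of the quaternionic Hopf fibration on `S^11`. -/
noncomputable def pQuat (t r η : ℝ) : ℝ :=
  ∑' m : ℕ, ∑' k : ℕ,
    betQ k m * Real.exp (-(4 * ((k * (k + m + 5) + 2 * m : ℕ) : ℝ)) * t) *
      (Real.sin ((m + 1) * η) / Real.sin η) *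
      (Real.cos r) ^ m * (jacP k (m + 1)).eval (Real.cos (2 * r))

/-- Gegenbauer polynomial `C_m^5` (polynomial extension to all real `x`). -/
noncomputable def geg5 (m : ℕ) (x : ℝ) : ℝ :=
  ∑ j ∈ Finset.range (m / 2 + 1),
    (-1 : ℝ) ^ j * (Nat.factorial (m - j + 4)) /
      ((Nat.factorial 4) * (Nat.factorial j) * (Nat.factorial (m - 2 * j))) * (2 * x) ^ (m - 2 * j)

/-- Radial heat kernel of the round sphere `S^11`, as a function of `cos δ`. -/
noncomputable def qS11 (t x : ℝ) : ℝ :=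
  (Real.Gamma 5 / (2 * π ^ 6)) *
    ∑' m : ℕ, (m + 5) * Real.exp (-((m * (m + 10) : ℕ) : ℝ) * t) * geg5 m x

/-- The kernel `g_t(η,y)` appearing in the integral representation. -/
noncomputable def gInt (t η y : ℝ) : ℝ :=
  (Real.sin η)⁻¹ ^ 3 *
    (Real.cos (η * y / (2 * t)) * (2 * y) * (η - 3 * t * Real.cot η) +
      Real.sin (η * y / (2 * t)) *
        (8 * t ^ 2 * Real.cot η ^ 2 + 4 * t ^ 2 * ((Real.sin η)⁻¹) ^ 2 -
          6 * t * η * Real.cot η + 2 * t + η ^ 2 - y ^ 2))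

/-- Theta-type function `V(t,δ)`. -/
noncomputable def Vtheta (t δ : ℝ) : ℝ :=
  (1 / Real.sqrt (4 * π * t)) * ∑' k : ℤ, Real.exp (-(δ - 2 * k * π) ^ 2 / (4 * t))

/-- The operator `f ↦ -(1/(2π sin δ)) f'`. -/
noncomputable def Dop (f : ℝ → ℝ) : ℝ → ℝ :=
  fun δ => -(1 / (2 * π * Real.sin δ)) * deriv f δ

/-!
Laplace's representation of the zonal functions of the sphere `S^(k + 2)`. Put
`z = cos η + i sin η cos φ` and `w = ∂z/∂η`, so that `∂w/∂η = -z`. For every entire function `f`,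
the identities `z² + w² = sin² φ` and `cos η · w + sin η · z = i cos φ` turn

`(sin η · ∂²/∂η² + (k + 1) cos η · ∂/∂η) f(z) + sin η · (z² f''(z) + (k + 2) z f'(z))`,

multiplied by the weight `sin^k φ`, into the exact derivative `∂/∂φ (i f'(z) sin^(k + 1) φ)`, whose
integral over `[0, π]` vanishes. On `f(z) = z^m` the Euler operator `z² f'' + (k + 2) z f'` acts as
multiplication by `m (m + k + 1)`.
-/

theorem hasDerivAt_intervalIntegral_of_continuous {𝕜 E : Type*} [RCLike 𝕜]
    [NormedAddCommGroup E] [NormedSpace ℝ E] [NormedSpace 𝕜 E] {μ : Measure ℝ}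
    [IsLocallyFiniteMeasure μ] {F F' : 𝕜 → ℝ → E} (hF : ∀ x, Continuous (F x))
    (hF' : Continuous (Function.uncurry F'))
    (hderiv : ∀ x t, HasDerivAt (F · t) (F' x t) x) (a b : ℝ) (x : 𝕜) :
    HasDerivAt (fun y => ∫ t in a..b, F y t ∂μ) (∫ t in a..b, F' x t ∂μ) x := by
  obtain ⟨C, hC⟩ := ((isCompact_closedBall x 1).prod
    (isCompact_uIcc (a := a) (b := b))).exists_bound_of_continuousOn hF'.continuousOn
  refine (intervalIntegral.hasDerivAt_integral_of_dominated_loc_of_deriv_le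
    (bound := fun _ => C) (Metric.ball_mem_nhds x one_pos) ?_ ?_ ?_ ?_ ?_ ?_).2
  · exact .of_forall fun y => (hF y).aestronglyMeasurable
  · exact (hF x).intervalIntegrable a b
  · exact (hF'.comp (Continuous.prodMk_right x)).aestronglyMeasurable
  · exact .of_forall fun t ht y hy =>
      hC (y, t) ⟨Metric.ball_subset_closedBall hy, Set.uIoc_subset_uIcc ht⟩
  · exact intervalIntegrable_const
  · exact .of_forall fun t _ y _ => hderiv y t

theorem deriv_re {g : ℝ → ℂ} {x : ℝ} (hg : DifferentiableAt ℝ g x) :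
    deriv (fun y => (g y).re) x = (deriv g x).re :=
  (Complex.reCLM.hasFDerivAt.comp_hasDerivAt x hg.hasDerivAt).deriv

/-- The base `cos η + i sin η cos φ` of Laplace's integral. Its `η`-derivative is
encoded as its value at `η + π / 2`. -/
noncomputable def laplaceBase (η φ : ℝ) : ℂ :=
  (cos η : ℂ) + Complex.I * ((sin η * cos φ : ℝ) : ℂ)

@[fun_prop]
theorem continuous_laplaceBase {X : Type*} [TopologicalSpace X] {u v : X → ℝ}
    (hu : Continuous u) (hv : Continuous v) : Continuous fun x => laplaceBase (u x) (v x) := by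
  unfold laplaceBase
  fun_prop

theorem laplaceBase_add_pi_div_two (η φ : ℝ) :
    laplaceBase (η + π / 2) φ = -(sin η : ℂ) + Complex.I * ((cos η * cos φ : ℝ) : ℂ) := by
  simp only [laplaceBase, cos_add_pi_div_two, sin_add_pi_div_two, Complex.ofReal_neg]

theorem hasDerivAt_laplaceBase_left (η φ : ℝ) :
    HasDerivAt (laplaceBase · φ) (laplaceBase (η + π / 2) φ) η := by
  rw [laplaceBase_add_pi_div_two, ← Complex.ofReal_neg]
  exact (hasDerivAt_cos η).ofReal_comp.add
    (((hasDerivAt_sin η).mul_const (cos φ)).ofReal_comp.const_mul Complex.I)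

theorem hasDerivAt_laplaceBase_add_pi_div_two (η φ : ℝ) :
    HasDerivAt (fun x => laplaceBase (x + π / 2) φ) (-laplaceBase η φ) η := by
  have h := (hasDerivAt_laplaceBase_left (η + π / 2) φ).comp_add_const η (π / 2)
  have antiperiodic : laplaceBase (η + π / 2 + π / 2) φ = -laplaceBase η φ := by
    simp only [laplaceBase, add_assoc, add_halves, cos_add_pi, sin_add_pi]
    push_cast
    ring
  rwa [antiperiodic] at h

theorem hasDerivAt_laplaceBase_right (η φ : ℝ) :
    HasDerivAt (laplaceBase η) (-(Complex.I * sin η * sin φ)) φ := by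
  have h := ((((hasDerivAt_cos φ).const_mul (sin η)).ofReal_comp).const_mul Complex.I).const_add
    (cos η : ℂ)
  refine h.congr_deriv ?_
  push_cast
  ring

theorem laplaceBase_sq_add_sq (η φ : ℝ) :
    laplaceBase η φ ^ 2 + laplaceBase (η + π / 2) φ ^ 2 = (sin φ : ℂ) ^ 2 := by
  rw [laplaceBase_add_pi_div_two, laplaceBase]
  push_cast
  linear_combination (1 - Complex.cos φ ^ 2) * Complex.sin_sq_add_cos_sq η
    - Complex.sin_sq_add_cos_sq φ
    + Complex.cos φ ^ 2 * (Complex.cos η ^ 2 + Complex.sin η ^ 2) * Complex.I_sq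

theorem cos_mul_laplaceBase_add_sin_mul (η φ : ℝ) :
    cos η * laplaceBase (η + π / 2) φ + sin η * laplaceBase η φ = Complex.I * cos φ := by
  rw [laplaceBase_add_pi_div_two, laplaceBase]
  push_cast
  linear_combination Complex.I * Complex.cos φ * Complex.sin_sq_add_cos_sq η

/-- Laplace's integral of `f (cos η + i sin η cos φ)` against `sin^k φ`, the polar-angle density
of the sphere `S^(k + 1)` of directions at the pole of `S^(k + 2)`. -/
noncomputable def laplaceIntegral (k : ℕ) (f : ℂ → ℂ) (η : ℝ) : ℂ :=
  ∫ φ in (0 : ℝ)..π, f (laplaceBase η φ) * (sin φ : ℂ) ^ k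

section Entire

variable {f : ℂ → ℂ} (hf : Differentiable ℂ f) (k : ℕ)
include hf

theorem hasDerivAt_laplaceIntegral (η : ℝ) :
    HasDerivAt (laplaceIntegral k f)
      (∫ φ in (0 : ℝ)..π,
        deriv f (laplaceBase η φ) * laplaceBase (η + π / 2) φ * (sin φ : ℂ) ^ k) η := by
  have cont_f := hf.continuous
  have cont_f' := hf.deriv.continuous
  have hasDerivAt_integrand (x φ : ℝ) :
      HasDerivAt (fun y => f (laplaceBase y φ) * (sin φ : ℂ) ^ k)
        (deriv f (laplaceBase x φ) * laplaceBase (x + π / 2) φ * (sin φ : ℂ) ^ k) x :=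
    ((hf _).hasDerivAt.comp x (hasDerivAt_laplaceBase_left x φ)).mul_const _
  exact hasDerivAt_intervalIntegral_of_continuous (fun x => by fun_prop)
    (by unfold Function.uncurry; fun_prop) hasDerivAt_integrand 0 π η

theorem hasDerivAt_deriv_laplaceIntegral (η : ℝ) :
    HasDerivAt (deriv (laplaceIntegral k f))
      (∫ φ in (0 : ℝ)..π,
        (deriv (deriv f) (laplaceBase η φ) * laplaceBase (η + π / 2) φ ^ 2
          - deriv f (laplaceBase η φ) * laplaceBase η φ) * (sin φ : ℂ) ^ k) η := by
  have cont_f' := hf.deriv.continuous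
  have cont_f'' := hf.deriv.deriv.continuous
  rw [funext fun x => (hasDerivAt_laplaceIntegral hf k x).deriv]
  have hasDerivAt_integrand (x φ : ℝ) :
      HasDerivAt
        (fun y => deriv f (laplaceBase y φ) * laplaceBase (y + π / 2) φ * (sin φ : ℂ) ^ k)
        ((deriv (deriv f) (laplaceBase x φ) * laplaceBase (x + π / 2) φ ^ 2
          - deriv f (laplaceBase x φ) * laplaceBase x φ) * (sin φ : ℂ) ^ k) x := by
    have hf'z := (hf.deriv _).hasDerivAt.comp x (hasDerivAt_laplaceBase_left x φ)
    refine ((hf'z.mul (hasDerivAt_laplaceBase_add_pi_div_two x φ)).mul_const _).congr_deriv ?_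
    simp only [Function.comp_apply]
    ring
  exact hasDerivAt_intervalIntegral_of_continuous (fun x => by fun_prop)
    (by unfold Function.uncurry; fun_prop) hasDerivAt_integrand 0 π η

theorem hasDerivAt_deriv_laplaceBase_mul_sin_pow (η φ : ℝ) :
    HasDerivAt (fun t => Complex.I * deriv f (laplaceBase η t) * (sin t : ℂ) ^ (k + 1))
      (sin η * ((deriv (deriv f) (laplaceBase η φ) * laplaceBase (η + π / 2) φ ^ 2
          - deriv f (laplaceBase η φ) * laplaceBase η φ) * (sin φ : ℂ) ^ k)
        + (k + 1) * cos η *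
          (deriv f (laplaceBase η φ) * laplaceBase (η + π / 2) φ * (sin φ : ℂ) ^ k)
        + sin η * ((laplaceBase η φ ^ 2 * deriv (deriv f) (laplaceBase η φ)
          + (k + 2) * laplaceBase η φ * deriv f (laplaceBase η φ)) * (sin φ : ℂ) ^ k)) φ := by
  have hf'z := (hf.deriv _).hasDerivAt.comp φ (hasDerivAt_laplaceBase_right η φ)
  refine ((hf'z.const_mul Complex.I).mul
    ((hasDerivAt_sin φ).ofReal_comp.pow (k + 1))).congr_deriv ?_
  simp only [Function.comp_apply, Pi.pow_apply, Nat.add_sub_cancel, Nat.cast_add, Nat.cast_one]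
  linear_combination
    -(sin η * deriv (deriv f) (laplaceBase η φ) * (sin φ : ℂ) ^ k) * laplaceBase_sq_add_sq η φ
    - ((k + 1) * deriv f (laplaceBase η φ) * (sin φ : ℂ) ^ k) *
      cos_mul_laplaceBase_add_sin_mul η φ
    - (sin η * deriv (deriv f) (laplaceBase η φ) * (sin φ : ℂ) ^ (k + 2)) * Complex.I_sq

theorem sin_mul_deriv_deriv_laplaceIntegral_add (η : ℝ) :
    sin η * deriv (deriv (laplaceIntegral k f)) η
        + (k + 1) * cos η * deriv (laplaceIntegral k f) η
      = -(sin η *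
          laplaceIntegral k (fun z => z ^ 2 * deriv (deriv f) z + (k + 2) * z * deriv f z) η) := by
  have cont_f' := hf.deriv.continuous
  have cont_f'' := hf.deriv.deriv.continuous
  have total := intervalIntegral.integral_eq_sub_of_hasDerivAt (a := 0) (b := π)
    (fun φ _ => hasDerivAt_deriv_laplaceBase_mul_sin_pow hf k η φ)
    (Continuous.intervalIntegrable (by fun_prop) 0 π)
  rw [intervalIntegral.integral_add (Continuous.intervalIntegrable (by fun_prop) 0 π)
      (Continuous.intervalIntegrable (by fun_prop) 0 π),
    intervalIntegral.integral_add (Continuous.intervalIntegrable (by fun_prop) 0 π)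
      (Continuous.intervalIntegrable (by fun_prop) 0 π)] at total
  simp only [intervalIntegral.integral_const_mul, sin_pi, sin_zero, Complex.ofReal_zero,
    zero_pow k.succ_ne_zero, mul_zero, sub_zero] at total
  rw [(hasDerivAt_deriv_laplaceIntegral hf k η).deriv, (hasDerivAt_laplaceIntegral hf k η).deriv,
    laplaceIntegral]
  linear_combination total

end Entire

theorem laplaceIntegral_const_mul (k : ℕ) (c : ℂ) (f : ℂ → ℂ) (η : ℝ) :
    laplaceIntegral k (fun z => c * f z) η = c * laplaceIntegral k f η := by
  simp only [laplaceIntegral, mul_assoc, intervalIntegral.integral_const_mul]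

theorem sq_mul_deriv_deriv_pow_add {𝕜 : Type*} [NontriviallyNormedField 𝕜] (m : ℕ) (c z : 𝕜) :
    z ^ 2 * deriv (deriv (· ^ m)) z + (c + 2) * z * deriv (· ^ m) z
      = m * (m + c + 1) * z ^ m := by
  have deriv_pow_eq (n : ℕ) : deriv (fun x : 𝕜 => x ^ n) = fun x => (n : 𝕜) * x ^ (n - 1) :=
    funext fun _ => deriv_pow_field n
  simp only [deriv_pow_eq, deriv_const_mul_field']
  rcases m with _ | _ | m <;> push_cast [Nat.add_sub_cancel] <;> ring

theorem sin_mul_deriv_deriv_laplaceIntegral_pow_add (k m : ℕ) (η : ℝ) :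
    sin η * deriv (deriv (laplaceIntegral k (· ^ m))) η
        + (k + 1) * cos η * deriv (laplaceIntegral k (· ^ m)) η
      = -(sin η * (m * (m + k + 1) * laplaceIntegral k (· ^ m) η)) := by
  rw [sin_mul_deriv_deriv_laplaceIntegral_add (differentiable_pow m)]
  simp only [sq_mul_deriv_deriv_pow_add, laplaceIntegral_const_mul]

/-- The zonal spherical function of degree `m` on `S^(k + 2)` as a function of the polar angle,
given by Laplace's integral and normalized to be `1` at the pole `η = 0`. -/
noncomputable def zonalFunction (k m : ℕ) (η : ℝ) : ℝ :=
  (Gamma ((k + 2) / 2) / (√π * Gamma ((k + 1) / 2))) *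
    ∫ φ in (0 : ℝ)..π, (laplaceBase η φ ^ m).re * sin φ ^ k

theorem zonalFunction_eq_re_laplaceIntegral (k m : ℕ) :
    zonalFunction k m = fun η =>
      (Gamma ((k + 2) / 2) / (√π * Gamma ((k + 1) / 2))) * (laplaceIntegral k (· ^ m) η).re := by
  funext η
  have integrable : IntervalIntegrable (fun φ => laplaceBase η φ ^ m * (sin φ : ℂ) ^ k)
      volume 0 π := Continuous.intervalIntegrable (by fun_prop) 0 π
  have re_integral := Complex.reCLM.intervalIntegral_comp_comm integrable
  simp only [Complex.reCLM_apply, ← Complex.ofReal_pow, Complex.re_mul_ofReal] at re_integral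
  simp only [zonalFunction, laplaceIntegral, re_integral, ← Complex.ofReal_pow]

theorem hOct_eigenfunction_general (k m : ℕ) {η : ℝ} (hη : sin η ≠ 0) :
    deriv (deriv (zonalFunction k m)) η + (k + 1) * cot η * deriv (zonalFunction k m) η
      = -((m : ℝ) * (m + k + 1)) * zonalFunction k m η := by
  have hf : Differentiable ℂ (fun z : ℂ => z ^ m) := differentiable_pow m
  have hL : Differentiable ℝ (laplaceIntegral k (· ^ m)) := fun x =>
    (hasDerivAt_laplaceIntegral hf k x).differentiableAt
  have hL' : Differentiable ℝ (deriv (laplaceIntegral k (· ^ m))) := fun x =>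
    (hasDerivAt_deriv_laplaceIntegral hf k x).differentiableAt
  have ode : sin η * (deriv (deriv (laplaceIntegral k (· ^ m))) η).re
      + (k + 1) * cos η * (deriv (laplaceIntegral k (· ^ m)) η).re
      = -(sin η * (m * (m + k + 1) * (laplaceIntegral k (· ^ m) η).re)) := by
    simpa [-Complex.ofReal_sin, -Complex.ofReal_cos] using
      congrArg Complex.re (sin_mul_deriv_deriv_laplaceIntegral_pow_add k m η)
  simp only [zonalFunction_eq_re_laplaceIntegral, deriv_const_mul_field', deriv_re (hL _),
    deriv_re (hL' _), cot_eq_cos_div_sin]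
  field_simp
  linear_combination ode

theorem hOct_eq_zonalFunction (m : ℕ) : hOct m = zonalFunction 5 m := by
  funext η
  norm_num [hOct, zonalFunction, laplaceBase]

/-- For every integer `m ≥ 0` and `η ∈ (0,π)`, `h_m'' + 6 cot η · h_m' = -m(m+6) h_m`:
`h_m` is an eigenfunction of the radial Laplacian of `S^7` with eigenvalue `-m(m+6)`. -/
theorem hOct_eigenfunction (m : ℕ) (η : ℝ) (hη : η ∈ Set.Ioo 0 π) :
    deriv (deriv (hOct m)) η + 6 * Real.cot η * deriv (hOct m) η
      = -((m : ℝ) * (m + 6)) * hOct m η := by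
  rw [hOct_eq_zonalFunction]
  linear_combination hOct_eigenfunction_general 5 m (sin_pos_of_mem_Ioo hη).ne'
end

section
/- For every integer m ≥ 0, ∫_0^π h_m(η)² sin⁶η dη = (√π·Γ(7/2)/(Γ(4)·(2m+6))) · (6!·m!/(m+5)!). -/
open Real MeasureTheory Filter Topology

/-!
The function `h_m` is the Gegenbauer polynomial `C_m^3`, normalized to be `1` at `1`, evaluated at
`cos η`. Indeed, for `z = x + y cos φ` with `y² = x² - 1`, the combination
`((m + n + 2) z² - (2m + n + 3) x z + (m + 1)) z^m sin^n φ` is the derivative of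
`z^(m + 1) y sin^(n + 1) φ`, so Laplace's integrals satisfy the Gegenbauer recurrence.

These polynomials `P_m` are eigenvectors, with distinct eigenvalues, of a Laplacian that is
self-adjoint for the weight `sin^(n + 1) η dη`, hence orthogonal. Pairing the recurrence with `P_m`
and with `P_(m + 2)` evaluates the integral of `cos η P_m P_(m + 1)` in two ways, which gives the
ratio of consecutive norms.
-/

section Zonal

open Polynomial

/-- The zonal spherical polynomial of degree `m` on the sphere `S^(n+2)`: the Gegenbauer polynomial
`C_m^λ` with `2 * λ = n + 1`, normalized to take the value `1` at `1`. It is encoded by its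
three-term recurrence. -/
noncomputable def zonalPoly (n : ℕ) : ℕ → ℝ[X]
  | 0 => 1
  | 1 => X
  | m + 2 => C (m + n + 2 : ℝ)⁻¹ *
      ((2 * m + n + 3 : ℝ[X]) * X * zonalPoly n (m + 1) - (m + 1 : ℝ[X]) * zonalPoly n m)

lemma zonalPoly_zero (n : ℕ) : zonalPoly n 0 = 1 := by
  rw [zonalPoly]

lemma zonalPoly_one (n : ℕ) : zonalPoly n 1 = X := by
  rw [zonalPoly]

lemma zonalPoly_add_two (n m : ℕ) :
    (m + n + 2 : ℝ[X]) * zonalPoly n (m + 2) =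
      (2 * m + n + 3 : ℝ[X]) * X * zonalPoly n (m + 1) - (m + 1 : ℝ[X]) * zonalPoly n m := by
  have hne : (m + n + 2 : ℝ) ≠ 0 := by positivity
  have hC : (m + n + 2 : ℝ[X]) = C (m + n + 2 : ℝ) := by simp [map_ofNat]
  rw [zonalPoly, hC, ← mul_assoc, ← C_mul, mul_inv_cancel₀ hne, C_1, one_mul]

lemma derivative_zonalPoly_contiguous (n m : ℕ) :
    (m + n + 1 : ℝ[X]) * derivative (zonalPoly n (m + 1)) =
        (m + 1 : ℝ[X]) *
          ((m + n + 1 : ℝ[X]) * zonalPoly n m + X * derivative (zonalPoly n m)) ∧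
      (m + n + 1 : ℝ[X]) * (X * derivative (zonalPoly n (m + 1))) =
        (m + 1 : ℝ[X]) *
          ((m + n + 1 : ℝ[X]) * zonalPoly n (m + 1) + derivative (zonalPoly n m)) := by
  induction m with
  | zero => simp [zonalPoly_zero, zonalPoly_one]
  | succ m ih =>
    obtain ⟨raise, lower⟩ := ih
    have hne : (m + n + 1 : ℝ[X]) ≠ 0 := by exact_mod_cast (m + n).succ_ne_zero
    have recur := zonalPoly_add_two n m
    have recur_derivative := congrArg derivative recur
    simp only [derivative_mul, derivative_add, derivative_natCast, add_zero, derivative_ofNat,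
      zero_mul, zero_add, derivative_sub, mul_zero, derivative_X, mul_one, derivative_one]
      at recur_derivative
    have raise_succ : (m + n + 2 : ℝ[X]) * derivative (zonalPoly n (m + 2)) =
        (m + 2 : ℝ[X]) *
          ((m + n + 2 : ℝ[X]) * zonalPoly n (m + 1) + X * derivative (zonalPoly n (m + 1))) := by
      linear_combination recur_derivative + lower
    refine ⟨by push_cast; linear_combination raise_succ, mul_left_cancel₀ hne ?_⟩
    push_cast
    linear_combination (m + n + 1 : ℝ[X]) * X * raise_succ - (m + 2 : ℝ[X]) * raise
      + (m + 2 : ℝ[X]) * X * lower - (m + 2 : ℝ[X]) * (m + n + 1 : ℝ[X]) * recur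

lemma one_sub_X_sq_mul_derivative_zonalPoly_succ (n m : ℕ) :
    (1 - X ^ 2) * derivative (zonalPoly n (m + 1)) =
      (m + 1 : ℝ[X]) * (zonalPoly n m - X * zonalPoly n (m + 1)) := by
  obtain ⟨raise, lower⟩ := derivative_zonalPoly_contiguous n m
  have hne : (m + n + 1 : ℝ[X]) ≠ 0 := by exact_mod_cast (m + n).succ_ne_zero
  apply mul_left_cancel₀ hne
  linear_combination raise - X * lower

/-- The Laplacian of `S^(n+2)` on functions of the polar angle `η`, expressed in the variable
`X = cos η`. -/
noncomputable def zonalLaplacian (n : ℕ) (p : ℝ[X]) : ℝ[X] :=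
  (1 - X ^ 2) * derivative (derivative p) - (n + 2 : ℝ[X]) * X * derivative p

lemma zonalLaplacian_zonalPoly (n m : ℕ) :
    zonalLaplacian n (zonalPoly n m) = -(m * (m + n + 1) : ℝ) • zonalPoly n m := by
  rw [neg_smul, smul_eq_C_mul]
  cases m with
  | zero => simp [zonalLaplacian, zonalPoly_zero]
  | succ m =>
    have deriv_eq := congrArg derivative (one_sub_X_sq_mul_derivative_zonalPoly_succ n m)
    simp only [derivative_mul, derivative_sub, derivative_one, derivative_X_pow_succ,
      Nat.cast_one, map_add, map_one, pow_one, zero_sub, neg_mul, derivative_natCast,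
      add_zero, zero_mul, derivative_X, one_mul, zero_add] at deriv_eq
    simp only [zonalLaplacian, Nat.cast_add, Nat.cast_one, map_mul, map_add, map_natCast, map_one]
    linear_combination deriv_eq - (derivative_zonalPoly_contiguous n m).2

/-- Integration over `S^(n+2)` of the function `p (cos η)` of the polar angle `η`, divided by the
volume of `S^(n+1)`. -/
noncomputable def zonalIntegral (n : ℕ) : ℝ[X] →ₗ[ℝ] ℝ where
  toFun p := ∫ η in (0 : ℝ)..π, p.eval (cos η) * sin η ^ (n + 1)
  map_add' p q := by
    simp only [eval_add, add_mul]
    exact intervalIntegral.integral_add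
      (Continuous.intervalIntegrable (by fun_prop) _ _)
      (Continuous.intervalIntegrable (by fun_prop) _ _)
  map_smul' a p := by
    simp only [eval_smul, smul_eq_mul, mul_assoc, intervalIntegral.integral_const_mul,
      RingHom.id_apply]

lemma zonalIntegral_apply (n : ℕ) (p : ℝ[X]) :
    zonalIntegral n p = ∫ η in (0 : ℝ)..π, p.eval (cos η) * sin η ^ (n + 1) :=
  rfl

lemma zonalIntegral_divergence (n : ℕ) (p : ℝ[X]) :
    zonalIntegral n ((1 - X ^ 2) * derivative p - (n + 2 : ℝ[X]) * X * p) = 0 := by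
  have hderiv (η : ℝ) : HasDerivAt (fun η => -(sin η ^ (n + 2) * p.eval (cos η)))
      (((1 - X ^ 2) * derivative p - (n + 2 : ℝ[X]) * X * p).eval (cos η) * sin η ^ (n + 1)) η := by
    refine (((hasDerivAt_sin η).pow (n + 2)).mul
      ((p.hasDerivAt (cos η)).comp η (hasDerivAt_cos η))).neg.congr_deriv ?_
    simp only [Nat.cast_add, Nat.cast_ofNat, Nat.add_one_sub_one, Function.comp_apply,
      Pi.pow_apply, eval_sub, eval_mul, eval_one, eval_pow, eval_X, eval_add, eval_natCast,
      eval_ofNat]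
    linear_combination (derivative p).eval (cos η) * sin η ^ (n + 1) * sin_sq_add_cos_sq η
  rw [zonalIntegral_apply, intervalIntegral.integral_eq_sub_of_hasDerivAt (fun η _ => hderiv η)
    (Continuous.intervalIntegrable (by fun_prop) _ _)]
  simp

lemma zonalIntegral_zonalLaplacian_mul (n : ℕ) (p q : ℝ[X]) :
    zonalIntegral n (zonalLaplacian n p * q) = zonalIntegral n (p * zonalLaplacian n q) := by
  rw [← sub_eq_zero, ← map_sub,
    ← zonalIntegral_divergence n (derivative p * q - p * derivative q)]
  congr 1
  simp only [zonalLaplacian, derivative_sub, derivative_mul]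
  ring

lemma zonalIntegral_zonalPoly_mul_of_ne (n : ℕ) {m k : ℕ} (hmk : m ≠ k) :
    zonalIntegral n (zonalPoly n m * zonalPoly n k) = 0 := by
  have selfAdjoint := zonalIntegral_zonalLaplacian_mul n (zonalPoly n m) (zonalPoly n k)
  simp only [zonalLaplacian_zonalPoly, smul_mul_assoc, mul_smul_comm, map_smul, smul_eq_mul]
    at selfAdjoint
  have hne : ((m : ℝ) - k) * (m + k + n + 1) ≠ 0 :=
    mul_ne_zero (sub_ne_zero.mpr (by exact_mod_cast hmk)) (by positivity)
  apply mul_left_cancel₀ hne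
  linear_combination -selfAdjoint

lemma zonalIntegral_X_mul_zonalPoly_eq_sq (n m : ℕ) :
    (2 * m + n + 3) * zonalIntegral n (X * zonalPoly n (m + 1) * zonalPoly n m) =
      (m + 1) * zonalIntegral n (zonalPoly n m ^ 2) := by
  have recur : (m + n + 2 : ℝ) • (zonalPoly n (m + 2) * zonalPoly n m) =
      (2 * m + n + 3 : ℝ) • (X * zonalPoly n (m + 1) * zonalPoly n m) -
        (m + 1 : ℝ) • zonalPoly n m ^ 2 := by
    simp only [smul_eq_C_mul, map_add, map_natCast, map_ofNat, map_mul, map_one]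
    linear_combination zonalPoly n m * zonalPoly_add_two n m
  have integrated := congrArg (zonalIntegral n) recur
  simp only [map_sub, map_smul, smul_eq_mul,
    zonalIntegral_zonalPoly_mul_of_ne n (show m + 2 ≠ m by lia)] at integrated
  linear_combination -integrated

lemma zonalIntegral_X_mul_zonalPoly_eq_succ_sq (n m : ℕ) :
    (2 * m + n + 1) * zonalIntegral n (X * zonalPoly n (m + 1) * zonalPoly n m) =
      (m + n + 1) * zonalIntegral n (zonalPoly n (m + 1) ^ 2) := by
  cases m with
  | zero => simp [zonalPoly_zero, zonalPoly_one, sq]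
  | succ m =>
    have recur : (m + n + 2 : ℝ) • zonalPoly n (m + 2) ^ 2 =
        (2 * m + n + 3 : ℝ) • (X * zonalPoly n (m + 2) * zonalPoly n (m + 1)) -
          (m + 1 : ℝ) • (zonalPoly n (m + 2) * zonalPoly n m) := by
      simp only [smul_eq_C_mul, map_add, map_natCast, map_ofNat, map_mul, map_one]
      linear_combination zonalPoly n (m + 2) * zonalPoly_add_two n m
    have integrated := congrArg (zonalIntegral n) recur
    simp only [map_sub, map_smul, smul_eq_mul,
      zonalIntegral_zonalPoly_mul_of_ne n (show m + 2 ≠ m by lia)] at integrated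
    push_cast
    linear_combination -integrated

theorem zonalIntegral_zonalPoly_sq (n m : ℕ) :
    zonalIntegral n (zonalPoly n m ^ 2) =
      (∫ η in (0 : ℝ)..π, sin η ^ (n + 1)) / (2 * m + n + 1) *
        ((n + 1).factorial * m.factorial / (m + n).factorial) := by
  induction m with
  | zero =>
    simp only [zonalPoly_zero, zonalIntegral_apply, one_pow, eval_one, one_mul, Nat.cast_zero,
      mul_zero, zero_add, Nat.factorial_succ, Nat.factorial_zero, Nat.cast_one, mul_one,
      Nat.cast_mul, Nat.cast_add]
    field_simp
  | succ m ih =>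
    have hsq := zonalIntegral_X_mul_zonalPoly_eq_sq n m
    have hsucc := zonalIntegral_X_mul_zonalPoly_eq_succ_sq n m
    have hmixed : zonalIntegral n (X * zonalPoly n (m + 1) * zonalPoly n m) =
        (m + 1) / (2 * m + n + 3) * zonalIntegral n (zonalPoly n m ^ 2) := by
      field_simp
      linear_combination hsq
    have hratio : zonalIntegral n (zonalPoly n (m + 1) ^ 2) =
        (2 * m + n + 1) / (m + n + 1) *
          zonalIntegral n (X * zonalPoly n (m + 1) * zonalPoly n m) := by
      field_simp
      linear_combination -hsucc
    rw [hratio, hmixed, ih, Nat.add_right_comm, Nat.factorial_succ (m + n), Nat.factorial_succ m]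
    push_cast
    field_simp
    ring

lemma integral_laplace_add_two {x y : ℂ} (hxy : y ^ 2 = x ^ 2 - 1) (n m : ℕ) :
    (m + n + 2) * ∫ φ in (0 : ℝ)..π, (x + y * cos φ) ^ (m + 2) * sin φ ^ n =
      (2 * m + n + 3) * x * (∫ φ in (0 : ℝ)..π, (x + y * cos φ) ^ (m + 1) * sin φ ^ n) -
        (m + 1) * ∫ φ in (0 : ℝ)..π, (x + y * cos φ) ^ m * sin φ ^ n := by
  have hderiv (φ : ℝ) :
      HasDerivAt (fun φ : ℝ => (x + y * cos φ) ^ (m + 1) * (y * (sin φ : ℂ) ^ (n + 1)))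
        ((m + n + 2) * ((x + y * cos φ) ^ (m + 2) * sin φ ^ n) -
          ((2 * m + n + 3) * x * ((x + y * cos φ) ^ (m + 1) * sin φ ^ n) -
            (m + 1) * ((x + y * cos φ) ^ m * sin φ ^ n))) φ := by
    have hsq : (sin φ : ℂ) ^ 2 + (cos φ : ℂ) ^ 2 = 1 := mod_cast sin_sq_add_cos_sq φ
    refine (((((hasDerivAt_cos φ).ofReal_comp.const_mul y).const_add x).pow (m + 1)).mul
      (((hasDerivAt_sin φ).ofReal_comp.pow (n + 1)).const_mul y)).congr_deriv ?_
    simp only [Pi.pow_apply, Nat.cast_add, Nat.cast_one, Nat.add_sub_cancel, Complex.ofReal_neg]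
    set c := (cos φ : ℂ)
    set s := (sin φ : ℂ)
    linear_combination (-(m + 1) * (x + y * c) ^ m * s ^ n) * (y ^ 2 * hsq + hxy)
  have hintegral := intervalIntegral.integral_eq_sub_of_hasDerivAt (fun φ _ => hderiv φ)
    (Continuous.intervalIntegrable (by fun_prop) 0 π)
  have hint (k : ℕ) (a : ℂ) : IntervalIntegrable
      (fun φ : ℝ => a * ((x + y * cos φ) ^ k * (sin φ : ℂ) ^ n)) volume 0 π :=
    Continuous.intervalIntegrable (by fun_prop) _ _
  rw [intervalIntegral.integral_sub (hint _ _) ((hint _ _).sub (hint _ _)),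
    intervalIntegral.integral_sub (hint _ _) (hint _ _)] at hintegral
  simp only [intervalIntegral.integral_const_mul] at hintegral
  simp only [sin_zero, sin_pi, Complex.ofReal_zero, zero_pow n.succ_ne_zero, mul_zero,
    sub_zero] at hintegral
  linear_combination hintegral

theorem integral_laplace_eq_aeval_zonalPoly {x y : ℂ} (hxy : y ^ 2 = x ^ 2 - 1) (n m : ℕ) :
    ∫ φ in (0 : ℝ)..π, (x + y * cos φ) ^ m * sin φ ^ n =
      aeval x (zonalPoly n m) * ∫ φ in (0 : ℝ)..π, (sin φ : ℂ) ^ n := by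
  induction m using Nat.twoStepInduction with
  | zero =>
    simp only [zonalPoly_zero, map_one, pow_zero, one_mul]
  | one =>
    have hcos : ∫ φ in (0 : ℝ)..π, (cos φ : ℂ) * (sin φ : ℂ) ^ n = 0 := by
      have hreal : ∫ φ in (0 : ℝ)..π, cos φ * sin φ ^ n = 0 := by
        simpa [mul_comm] using integral_sin_pow_mul_cos_pow_odd (a := 0) (b := π) n 0
      have hofReal := congrArg Complex.ofReal hreal
      rw [← intervalIntegral.integral_ofReal] at hofReal
      exact_mod_cast hofReal
    have hint (f : ℝ → ℂ) (hf : Continuous f) : IntervalIntegrable f volume 0 π :=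
      hf.intervalIntegrable 0 π
    simp only [zonalPoly_one, aeval_X, pow_one, add_mul, mul_assoc]
    rw [intervalIntegral.integral_add (hint _ (by fun_prop)) (hint _ (by fun_prop)),
      intervalIntegral.integral_const_mul, intervalIntegral.integral_const_mul, hcos, mul_zero,
      add_zero]
  | more m ih₀ ih₁ =>
    have hne : (m + n + 2 : ℂ) ≠ 0 := by exact_mod_cast (m + n + 1).succ_ne_zero
    have recur := congrArg (aeval x) (zonalPoly_add_two n m)
    simp only [map_mul, map_add, map_natCast, map_ofNat, aeval_sub, aeval_X, map_one] at recur
    apply mul_left_cancel₀ hne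
    rw [integral_laplace_add_two hxy, ih₀, ih₁]
    linear_combination -(∫ φ in (0 : ℝ)..π, (sin φ : ℂ) ^ n) * recur

lemma integral_re_laplace_eq_eval_zonalPoly (n m : ℕ) (η : ℝ) :
    ∫ φ in (0 : ℝ)..π, (((cos η : ℂ) + Complex.I * ((sin η * cos φ : ℝ) : ℂ)) ^ m).re * sin φ ^ n =
      (zonalPoly n m).eval (cos η) * ∫ φ in (0 : ℝ)..π, sin φ ^ n := by
  have hcircle : (Complex.I * (sin η : ℂ)) ^ 2 = (cos η : ℂ) ^ 2 - 1 := by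
    have hsq : (sin η : ℂ) ^ 2 + (cos η : ℂ) ^ 2 = 1 := mod_cast sin_sq_add_cos_sq η
    linear_combination (sin η : ℂ) ^ 2 * Complex.I_sq - hsq
  have haeval : aeval (cos η : ℂ) (zonalPoly n m) = (((zonalPoly n m).eval (cos η) : ℝ) : ℂ) :=
    (ofReal_eval (K := ℂ) (zonalPoly n m) (cos η)).symm
  have hcomplex := integral_laplace_eq_aeval_zonalPoly hcircle n m
  simp only [haeval, ← Complex.ofReal_pow, intervalIntegral.integral_ofReal] at hcomplex
  rw [← Complex.ofReal_re (_ * _), Complex.ofReal_mul, ← hcomplex, ← Complex.reCLM_apply,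
    ← Complex.reCLM.intervalIntegral_comp_comm
      (Continuous.intervalIntegrable (by fun_prop) _ _)]
  simp only [Complex.reCLM_apply, Complex.re_mul_ofReal, Complex.ofReal_mul, mul_assoc]

end Zonal

lemma integral_sin_pow_eq_Gamma (n : ℕ) :
    ∫ φ in (0 : ℝ)..π, sin φ ^ n = √π * Gamma ((n + 1) / 2) / Gamma (n / 2 + 1) := by
  induction n using Nat.twoStepInduction with
  | zero =>
    norm_num [← one_div, Gamma_one_half_eq, mul_self_sqrt pi_pos.le, -one_div]
  | one =>
    have hGamma : Gamma (3 / 2) = √π / 2 := by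
      rw [show (3 / 2 : ℝ) = 1 / 2 + 1 by norm_num, Gamma_add_one (by norm_num), Gamma_one_half_eq]
      ring
    norm_num [hGamma]
    field_simp
  | more n ih _ =>
    have hnum : Gamma ((n + 2 + 1 : ℝ) / 2) = (n + 1) / 2 * Gamma ((n + 1) / 2) := by
      rw [← Gamma_add_one (by positivity)]
      ring_nf
    have hden : Gamma ((n + 2 : ℝ) / 2 + 1) = (n / 2 + 1) * Gamma (n / 2 + 1) := by
      rw [← Gamma_add_one (by positivity)]
      ring_nf
    push_cast
    rw [integral_sin_pow, ih, hnum, hden]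
    simp only [sin_zero, sin_pi, ne_eq, n.succ_ne_zero, not_false_eq_true, zero_pow, zero_mul,
      sub_self, zero_div, zero_add]
    field_simp

lemma hOct_eq_eval_zonalPoly (m : ℕ) (η : ℝ) : hOct m η = (zonalPoly 5 m).eval (cos η) := by
  have hsin : ∫ φ in (0 : ℝ)..π, sin φ ^ 5 = √π * Gamma 3 / Gamma (7 / 2) := by
    rw [integral_sin_pow_eq_Gamma]
    norm_num
  have hGamma : Gamma (7 / 2) ≠ 0 := (Gamma_pos_of_pos (by norm_num)).ne'
  have hGamma' : Gamma 3 ≠ 0 := (Gamma_pos_of_pos (by norm_num)).ne'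
  rw [hOct, integral_re_laplace_eq_eval_zonalPoly, hsin]
  field_simp [hGamma, hGamma']

/-- `L²` norm of the eigenfunctions `h_m`:
`∫_0^π h_m(η)² sin⁶η dη = (√π Γ(7/2)/(Γ(4)(2m+6))) · 6! m!/(m+5)!`. -/
theorem hOct_norm (m : ℕ) :
    ∫ η in (0 : ℝ)..π, (hOct m η) ^ 2 * Real.sin η ^ 6
      = Real.sqrt π * Real.Gamma (7 / 2) / (Real.Gamma 4 * (2 * (m : ℝ) + 6)) *
          ((Nat.factorial 6 : ℝ) * (Nat.factorial m : ℝ) / (Nat.factorial (m + 5) : ℝ)) := by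
  calc ∫ η in (0 : ℝ)..π, hOct m η ^ 2 * sin η ^ 6
      = zonalIntegral 5 (zonalPoly 5 m ^ 2) := by
        simp only [hOct_eq_eval_zonalPoly, zonalIntegral_apply, Polynomial.eval_pow]
    _ = (∫ η in (0 : ℝ)..π, sin η ^ 6) / (2 * m + 6) *
          (Nat.factorial 6 * Nat.factorial m / Nat.factorial (m + 5)) := by
        rw [zonalIntegral_zonalPoly_sq]
        norm_num [add_assoc]
    _ = _ := by
        rw [integral_sin_pow_eq_Gamma]
        norm_num [div_div]
end

section
/- For all t > 0 and δ ∈ (0,π), the two classical expressions for the radial heat kernel of the round sphere S^{11} agree: q_t(cos δ) = e^{25t}·D^5 V(t,δ), where D denotes the operator f ↦ −(1/(2π·sin δ))·∂f/∂δ applied five times and V(t,δ) = (1/√(4πt))·Σ_{k∈ℤ} e^{−(δ−2kπ)²/(4t)}. -/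
open Real MeasureTheory Filter Topology

/-! On the circle, Poisson summation gives `2π V(t,δ) = 1 + 2 ∑ e^{-n²t} Tₙ(cos δ)`. In the variable
`x = cos δ` the operator `D` is `(2π)⁻¹ d/dx`, and `T'ₙ = n C¹ₙ₋₁`, `(Cˡₘ)' = 2l Cˡ⁺¹ₘ₋₁`; so each
application of `D` turns the heat kernel of `S^{2k+1}` into that of `S^{2k+3}`, up to the factor
`e^{-(2k+1)t}`. These factors accumulate to `e^{-k²t}` after `k` steps. -/

open Polynomial Finset
open scoped Nat

section Gegenbauer

variable (R : Type*) [CommRing R]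

/-- The Gegenbauer polynomial `C_m^{k+1}`. The explicit sum is indexed by the pairs `(m - j, j)`;
the binomial coefficient `(m - j).choose j` kills the pairs for which the exponent `m - 2j` would be
truncated. -/
noncomputable def gegenbauer (k m : ℕ) : R[X] :=
  ∑ p ∈ antidiagonal m,
    (-1) ^ p.2 * (p.1.choose p.2 : R[X]) * ((p.1 + k).choose k : R[X]) * (2 * X) ^ (p.1 - p.2)

@[simp]
lemma gegenbauer_zero_right (k : ℕ) : gegenbauer R k 0 = 1 := by
  simp [gegenbauer]

lemma choose_succ_mul_pow_sub {S : Type*} [CommSemiring S] (a : S) (i j : ℕ) :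
    (i.choose (j + 1) : S) * a ^ (i - j) = a * ((i.choose (j + 1) : S) * a ^ (i - (j + 1))) := by
  rcases le_or_gt i j with h | h
  · simp [Nat.choose_eq_zero_of_lt (Nat.lt_succ_of_le h)]
  · rw [show i - j = i - (j + 1) + 1 by lia, pow_succ]
    ring

lemma gegenbauer_zero_left_add_two (n : ℕ) :
    gegenbauer R 0 (n + 2) = 2 * X * gegenbauer R 0 (n + 1) - gegenbauer R 0 n := by
  have pascal (i j : ℕ) :
      (-1) ^ (j + 1) * ((i + 1).choose (j + 1) : R[X]) * (2 * X) ^ (i + 1 - (j + 1)) =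
        2 * X * ((-1) ^ (j + 1) * (i.choose (j + 1) : R[X]) * (2 * X) ^ (i - (j + 1))) -
          (-1) ^ j * (i.choose j : R[X]) * (2 * X) ^ (i - j) := by
    rw [Nat.choose_succ_succ, Nat.add_sub_add_right]
    push_cast
    linear_combination (-1) ^ (j + 1) * choose_succ_mul_pow_sub (2 * X : R[X]) i j
  simp only [gegenbauer, Nat.choose_zero_right, Nat.cast_one, mul_one]
  rw [Nat.sum_antidiagonal_succ, Nat.sum_antidiagonal_succ', Nat.sum_antidiagonal_succ' (n := n)]
  simp only [pascal, sum_sub_distrib, ← mul_sum]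
  simp only [pow_succ, mul_neg, mul_one, neg_neg, Nat.choose_zero_succ, Nat.cast_zero, mul_zero,
    zero_tsub, pow_zero, Nat.choose_zero_right, Nat.cast_one, tsub_zero, one_mul, neg_mul,
    sum_neg_distrib, zero_add]
  ring

lemma gegenbauer_zero_left (n : ℕ) : gegenbauer R 0 n = Chebyshev.U R n := by
  induction n using Nat.twoStepInduction with
  | zero => simp
  | one => simp [gegenbauer, Nat.sum_antidiagonal_succ]
  | more n ih ih' =>
    rw [gegenbauer_zero_left_add_two, ih, ih']
    push_cast
    rw [Chebyshev.U_add_two]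

lemma choose_succ_mul_choose_succ_add_mul_sub (i j k : ℕ) :
    (i + 1).choose j * (i + 1 + k).choose k * (i + 1 - j) =
      (k + 1) * (i.choose j * (i + (k + 1)).choose (k + 1)) := by
  have choose_succ := (Nat.choose_mul_succ_eq i j).symm
  have absorb := Nat.choose_succ_right_eq (i + 1 + k) k
  rw [Nat.add_sub_cancel] at absorb
  rw [show i + (k + 1) = i + 1 + k by ring]
  linear_combination (i + 1 + k).choose k * choose_succ - i.choose j * absorb

lemma derivative_gegenbauer_succ (k m : ℕ) :
    derivative (gegenbauer R k (m + 1)) = 2 * (k + 1) * gegenbauer R (k + 1) m := by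
  rw [gegenbauer, Nat.sum_antidiagonal_succ, gegenbauer, mul_sum]
  simp only [Nat.choose_zero_succ, Nat.cast_zero, mul_zero, zero_mul, zero_add, derivative_sum]
  refine sum_congr rfl fun ⟨i, j⟩ _ ↦ ?_
  have coeff := congrArg (Nat.cast : ℕ → R[X]) (choose_succ_mul_choose_succ_add_mul_sub i j k)
  push_cast at coeff
  have exponent : i + 1 - j - 1 = i - j := by lia
  simp only [derivative_mul, derivative_pow, derivative_neg, derivative_one, derivative_natCast,
    derivative_ofNat, derivative_X, exponent, map_natCast, neg_zero, mul_zero, zero_mul, add_zero,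
    mul_one, zero_add]
  linear_combination 2 * (-1) ^ j * (2 * X) ^ (i - j) * coeff

variable {R} in
lemma eval_gegenbauer (k m : ℕ) (x : R) :
    (gegenbauer R k m).eval x =
      ∑ p ∈ antidiagonal m,
        (-1) ^ p.2 * (p.1.choose p.2 : R) * ((p.1 + k).choose k : R) * (2 * x) ^ (p.1 - p.2) := by
  simp [gegenbauer, eval_finsetSum]

variable (K : Type*) [Field K] [CharZero K]

lemma choose_mul_add_choose_eq_factorial_div {i j : ℕ} (h : j ≤ i) (k : ℕ) :
    (i.choose j * (i + k).choose k : K) = (i + k)! / (k ! * j ! * (i - j)!) := by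
  have : (i ! : K) ≠ 0 := Nat.cast_ne_zero.mpr i.factorial_ne_zero
  rw [Nat.cast_choose K h, Nat.cast_choose K (Nat.le_add_left k i), Nat.add_sub_cancel]
  field_simp

variable {K} in
lemma eval_gegenbauer_eq_sum_range (k m : ℕ) (x : K) :
    (gegenbauer K k m).eval x =
      ∑ j ∈ range (m / 2 + 1),
        (-1) ^ j * (m - j + k)! / (k ! * j ! * (m - 2 * j)!) * (2 * x) ^ (m - 2 * j) := by
  rw [eval_gegenbauer, ← Nat.sum_antidiagonal_swap, Nat.sum_antidiagonal_eq_sum_range_succ_mk]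
  symm
  refine sum_subset_zero_on_sdiff (range_mono (by lia)) (fun j hj ↦ ?_) fun j hj ↦ ?_
  · have out_of_range : m - j < j := by grind
    simp [Nat.choose_eq_zero_of_lt out_of_range]
  · have in_range : 2 * j ≤ m := by grind
    have coeff := choose_mul_add_choose_eq_factorial_div K (show j ≤ m - j by lia) k
    rw [show m - j - j = m - 2 * j by lia] at coeff
    simp only [Prod.swap_prod_mk, show m - j - j = m - 2 * j by lia]
    linear_combination -(-1) ^ j * (2 * x) ^ (m - 2 * j) * coeff

end Gegenbauer

lemma geg5_eq_eval_gegenbauer (m : ℕ) (x : ℝ) : geg5 m x = (gegenbauer ℝ 4 m).eval x := by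
  rw [eval_gegenbauer_eq_sum_range, geg5]

lemma abs_eval_gegenbauer_le (k m : ℕ) {r x : ℝ} (hr : 1 ≤ r) (hx : |x| ≤ r) :
    |(gegenbauer ℝ k m).eval x| ≤ 2 ^ k * (16 * r) ^ m := by
  have term_le (p : ℕ × ℕ) (hp : p ∈ antidiagonal m) :
      |(-1) ^ p.2 * (p.1.choose p.2 : ℝ) * ((p.1 + k).choose k : ℝ) * (2 * x) ^ (p.1 - p.2)| ≤
        2 ^ m * 2 ^ (m + k) * (2 * r) ^ m := by
    have hpm : p.1 ≤ m := (HasAntidiagonal.mem_antidiagonal.mp hp).le.trans' (by lia)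
    have choose_le : (p.1.choose p.2 : ℝ) ≤ 2 ^ m := by
      exact_mod_cast (Nat.choose_le_two_pow _ _).trans (pow_le_pow_right₀ one_le_two hpm)
    have choose_add_le : ((p.1 + k).choose k : ℝ) ≤ 2 ^ (m + k) := by
      exact_mod_cast (Nat.choose_le_two_pow _ _).trans (pow_le_pow_right₀ one_le_two (by lia))
    have pow_le : |2 * x| ^ (p.1 - p.2) ≤ (2 * r) ^ m :=
      calc |2 * x| ^ (p.1 - p.2) ≤ (2 * r) ^ (p.1 - p.2) := by
            rw [abs_mul, abs_two]
            gcongr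
        _ ≤ (2 * r) ^ m := pow_le_pow_right₀ (by linarith) (by lia)
    rw [abs_mul, abs_mul, abs_mul, abs_neg_one_pow, one_mul, Nat.abs_cast, Nat.abs_cast, abs_pow]
    gcongr
  calc |(gegenbauer ℝ k m).eval x|
      ≤ #(antidiagonal m) • (2 ^ m * 2 ^ (m + k) * (2 * r) ^ m) := by
        rw [eval_gegenbauer]
        exact (abs_sum_le_sum_abs _ _).trans (sum_le_card_nsmul _ _ _ term_le)
    _ = (m + 1 : ℕ) * (2 ^ m * 2 ^ (m + k) * (2 * r) ^ m) := by
        rw [Nat.card_antidiagonal, nsmul_eq_mul]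
    _ ≤ 2 ^ m * (2 ^ m * 2 ^ (m + k) * (2 * r) ^ m) := by
        gcongr
        exact_mod_cast Nat.lt_two_pow_self
    _ = 2 ^ k * (16 * r) ^ m := by
        rw [show (16 : ℝ) = 2 ^ 4 by norm_num, mul_pow, mul_pow, ← pow_mul]
        ring

lemma summable_pow_mul_exp_neg_mul_sq_mul_pow (p : ℕ) {t a : ℝ} (ht : 0 < t) (ha : 0 < a) :
    Summable fun n : ℕ ↦ (n : ℝ) ^ p * exp (-t * n ^ 2) * a ^ n := by
  have majorant := (summable_pow_mul_jacobiTheta₂_term_bound (log a / (2 * π))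
    (div_pos ht pi_pos) p).comp_injective Nat.cast_injective
  refine majorant.congr fun n ↦ ?_
  have exponent : -π * (t / π * n ^ 2 - 2 * (log a / (2 * π)) * n) = -t * n ^ 2 + n * log a := by
    field_simp
    ring
  simp only [Function.comp_apply, Int.cast_abs, Int.cast_natCast, Nat.abs_cast]
  rw [exponent, exp_add, exp_nat_mul, exp_log ha, mul_assoc]

/-- The `m`-th term of the zonal expansion of the heat kernel of the unit sphere `S^{2k+3}`, up to
the normalization `k! / (2π^{k+2})`: a polynomial in the cosine of the distance to the pole. -/
noncomputable def oddSphereHeatMode (k : ℕ) (t : ℝ) (m : ℕ) : ℝ[X] :=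
  C ((m + k + 1) * exp (-(m * (m + 2 * k + 2)) * t)) * gegenbauer ℝ k m

/-- The heat kernel of the unit sphere `S^{2k+3}`, as a function of the cosine of the distance to
the pole. -/
noncomputable def oddSphereHeatKernel (k : ℕ) (t x : ℝ) : ℝ :=
  k ! / (2 * π ^ (k + 2)) * ∑' m, (oddSphereHeatMode k t m).eval x

/-- The heat kernel of the circle of length `2π`, as a function of the cosine of the distance to
the pole. -/
noncomputable def circleHeatKernel (t x : ℝ) : ℝ :=
  1 / (2 * π) *
    (1 + 2 * ∑' n : ℕ, (C (exp (-(n + 1) ^ 2 * t)) * Chebyshev.T ℝ (n + 1)).eval x)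

lemma abs_eval_oddSphereHeatMode_le (k m : ℕ) {t r x : ℝ} (ht : 0 ≤ t) (hr : 1 ≤ r)
    (hx : |x| ≤ r) :
    |(oddSphereHeatMode k t m).eval x| ≤
      (m + k + 1) * exp (-t * m ^ 2) * (2 ^ k * (16 * r) ^ m) := by
  have exponent_le : -(m * (m + 2 * k + 2)) * t ≤ -t * m ^ 2 := by
    have : 0 ≤ t * (m * (2 * k + 2)) := by positivity
    linarith
  rw [oddSphereHeatMode, eval_mul, eval_C, abs_mul, abs_of_nonneg (by positivity)]
  gcongr
  exact abs_eval_gegenbauer_le k m hr hx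

lemma summable_oddSphereHeatMode_bound (k : ℕ) {t r : ℝ} (ht : 0 < t) (hr : 0 < r) :
    Summable fun m : ℕ ↦ (m + k + 1) * exp (-t * m ^ 2) * (2 ^ k * (16 * r) ^ m) := by
  have bound (p : ℕ) := summable_pow_mul_exp_neg_mul_sq_mul_pow p ht (show 0 < 16 * r by positivity)
  refine (((bound 1).add ((bound 0).mul_left (k + 1 : ℝ))).mul_left (2 ^ k)).congr fun m ↦ ?_
  ring

lemma summable_eval_oddSphereHeatMode (k : ℕ) {t : ℝ} (ht : 0 < t) (x : ℝ) :
    Summable fun m ↦ (oddSphereHeatMode k t m).eval x :=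
  have hr : 1 ≤ |x| + 1 := by simp
  .of_norm_bounded (summable_oddSphereHeatMode_bound k ht (by positivity)) fun m ↦
    abs_eval_oddSphereHeatMode_le k m ht.le hr (by simp)

lemma hasDerivAt_tsum_eval_of_derivative_eq (k : ℕ) {t c x₀ : ℝ} (ht : 0 < t) {P : ℕ → ℝ[X]}
    (derivative_eq : ∀ m, derivative (P m) = C c * oddSphereHeatMode k t m)
    (summable_eval : Summable fun m ↦ (P m).eval x₀) (x : ℝ) :
    HasDerivAt (fun y ↦ ∑' m, (P m).eval y) (c * ∑' m, (oddSphereHeatMode k t m).eval x) x := by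
  have hr : 1 ≤ 1 + |x₀| + |x| := by linarith [abs_nonneg x₀, abs_nonneg x]
  set r := 1 + |x₀| + |x|
  have hasDerivAt_eval (m : ℕ) (y : ℝ) :
      HasDerivAt (fun z ↦ (P m).eval z) (c * (oddSphereHeatMode k t m).eval y) y := by
    simpa [derivative_eq] using (P m).hasDerivAt y
  have norm_le (m : ℕ) (y : ℝ) (hy : y ∈ Metric.ball 0 r) :
      ‖c * (oddSphereHeatMode k t m).eval y‖ ≤
        |c| * ((m + k + 1) * exp (-t * m ^ 2) * (2 ^ k * (16 * r) ^ m)) := by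
    rw [norm_mul, norm_eq_abs, norm_eq_abs]
    gcongr
    exact abs_eval_oddSphereHeatMode_le k m ht.le hr (by simpa using (mem_ball_zero_iff.mp hy).le)
  rw [← tsum_mul_left]
  refine hasDerivAt_tsum_of_isPreconnected
    ((summable_oddSphereHeatMode_bound k ht (by positivity)).mul_left |c|) Metric.isOpen_ball
    (convex_ball 0 r).isPreconnected (fun m y _ ↦ hasDerivAt_eval m y) norm_le ?_ summable_eval ?_
  all_goals
    rw [mem_ball_zero_iff, norm_eq_abs]
    linarith [abs_nonneg x₀, abs_nonneg x]

lemma derivative_oddSphereHeatMode_succ (k m : ℕ) (t : ℝ) :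
    derivative (oddSphereHeatMode k t (m + 1)) =
      C (2 * (k + 1) * exp (-(2 * k + 3) * t)) * oddSphereHeatMode (k + 1) t m := by
  have exponent : -((m + 1 : ℝ) * (m + 1 + 2 * k + 2)) * t =
      -(2 * k + 3) * t + -(m * (m + 2 * (k + 1) + 2)) * t := by ring
  simp only [oddSphereHeatMode, derivative_C_mul, derivative_gegenbauer_succ]
  push_cast
  rw [exponent, exp_add]
  simp only [C_mul, C_add, C_1, map_natCast, map_ofNat]
  ring

lemma hasDerivAt_oddSphereHeatKernel (k : ℕ) {t : ℝ} (ht : 0 < t) (x : ℝ) :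
    HasDerivAt (oddSphereHeatKernel k t)
      (2 * π * (exp (-(2 * k + 3) * t) * oddSphereHeatKernel (k + 1) t x)) x := by
  have split_zero : oddSphereHeatKernel k t = fun y ↦ k ! / (2 * π ^ (k + 2)) *
      (k + 1 + ∑' m, (oddSphereHeatMode k t (m + 1)).eval y) := by
    funext y
    rw [oddSphereHeatKernel, (summable_eval_oddSphereHeatMode k ht y).tsum_eq_zero_add]
    simp [oddSphereHeatMode]
  have summable_succ :=
    (summable_nat_add_iff 1).mpr (summable_eval_oddSphereHeatMode k ht x)
  rw [split_zero]
  refine (((hasDerivAt_tsum_eval_of_derivative_eq (k + 1) ht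
    (derivative_oddSphereHeatMode_succ k · t) summable_succ x).const_add _).const_mul
    _).congr_deriv ?_
  rw [oddSphereHeatKernel, Nat.factorial_succ]
  push_cast
  field_simp
  ring

lemma hasDerivAt_circleHeatKernel {t : ℝ} (ht : 0 < t) (x : ℝ) :
    HasDerivAt (circleHeatKernel t) (2 * π * (exp (-t) * oddSphereHeatKernel 0 t x)) x := by
  have derivative_eq (n : ℕ) :
      derivative (C (exp (-(n + 1) ^ 2 * t)) * Chebyshev.T ℝ (n + 1)) =
        C (exp (-t)) * oddSphereHeatMode 0 t n := by
    have exponent : -(n + 1 : ℝ) ^ 2 * t = -t + -(n * (n + 2 * (0 : ℕ) + 2)) * t := by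
      push_cast
      ring
    rw [oddSphereHeatMode, gegenbauer_zero_left, derivative_C_mul, Chebyshev.T_derivative_eq_U,
      exponent, exp_add]
    simp only [Nat.cast_zero, mul_zero, add_zero, neg_mul, map_mul, Int.cast_add,
      Int.cast_natCast, Int.cast_one, add_sub_cancel_right, map_add, map_natCast, map_one]
    ring
  have summable_one :
      Summable fun n : ℕ ↦ (C (exp (-(n + 1) ^ 2 * t)) * Chebyshev.T ℝ (n + 1)).eval 1 := by
    have gaussian := summable_pow_mul_exp_neg_mul_sq_mul_pow 0 ht one_pos
    refine ((summable_nat_add_iff 1).mpr gaussian).congr fun n ↦ ?_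
    simp [mul_comm]
  refine ((((hasDerivAt_tsum_eval_of_derivative_eq 0 ht derivative_eq summable_one x).const_mul
    2).const_add 1).const_mul (1 / (2 * π))).congr_deriv ?_
  rw [oddSphereHeatKernel, Nat.factorial_zero]
  push_cast
  field_simp

open HurwitzZeta in
lemma tsum_exp_neg_sq_div_eq_tsum_cos {t : ℝ} (ht : 0 < t) (δ : ℝ) :
    ∑' k : ℤ, exp (-(δ - 2 * k * π) ^ 2 / (4 * t)) =
      √(t / π) * (1 + 2 * ∑' n : ℕ, exp (-(n + 1) ^ 2 * t) * cos ((n + 1) * δ)) := by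
  have evenKernel_eq : evenKernel (-δ / (2 * π) : ℝ) (π / t) =
      ∑' k : ℤ, exp (-(δ - 2 * k * π) ^ 2 / (4 * t)) := by
    rw [← (hasSum_int_evenKernel (-δ / (2 * π)) (div_pos pi_pos ht)).tsum_eq]
    congr! 3 with k
    field_simp
    ring
  have cosKernel_eq : cosKernel (-δ / (2 * π) : ℝ) (t / π) =
      1 + 2 * ∑' n : ℕ, exp (-(n + 1) ^ 2 * t) * cos ((n + 1) * δ) := by
    rw [← sub_eq_iff_eq_add', ← tsum_mul_left,
      ← (hasSum_nat_cosKernel₀ (-δ / (2 * π)) (div_pos ht pi_pos)).tsum_eq]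
    congr! 2 with n
    rw [show 2 * π * (-δ / (2 * π)) * (n + 1) = -((n + 1) * δ) by field_simp, cos_neg,
      show -π * (n + 1) ^ 2 * (t / π) = -(n + 1) ^ 2 * t by field_simp]
    ring
  rw [← evenKernel_eq, ← cosKernel_eq, evenKernel_functional_equation, ← sqrt_eq_rpow, one_div_div,
    one_div, ← sqrt_inv, inv_div]

lemma Vtheta_eq_circleHeatKernel {t : ℝ} (ht : 0 < t) (δ : ℝ) :
    Vtheta t δ = circleHeatKernel t (cos δ) := by
  have eval_T (n : ℕ) : (C (exp (-(n + 1) ^ 2 * t)) * Chebyshev.T ℝ (n + 1)).eval (cos δ) =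
      exp (-(n + 1) ^ 2 * t) * cos ((n + 1) * δ) := by
    rw [eval_mul, eval_C, Chebyshev.T_real_cos]
    push_cast
    rfl
  have normalization : 1 / √(4 * π * t) * √(t / π) = 1 / (2 * π) := by
    rw [show 4 * π * t = (2 * π) ^ 2 * (t / π) by field_simp; ring, sqrt_mul (by positivity),
      sqrt_sq (by positivity)]
    have : √(t / π) ≠ 0 := by positivity
    field_simp
  simp only [circleHeatKernel, eval_T]
  rw [Vtheta, tsum_exp_neg_sq_div_eq_tsum_cos ht, ← mul_assoc, normalization]

lemma Dop_eq_of_eq_comp_cos {f g : ℝ → ℝ} {c δ : ℝ} (hδ : sin δ ≠ 0)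
    (hfg : ∀ θ, sin θ ≠ 0 → f θ = g (cos θ)) (hg : HasDerivAt g (2 * π * c) (cos δ)) :
    Dop f δ = c := by
  have hfg : f =ᶠ[𝓝 δ] g ∘ cos := (continuous_sin.continuousAt.eventually_ne hδ).mono hfg
  rw [Dop, hfg.deriv_eq, (hg.comp δ (hasDerivAt_cos δ)).deriv]
  field_simp

lemma iterate_Dop_Vtheta (k : ℕ) {t : ℝ} (ht : 0 < t) {δ : ℝ} (hδ : sin δ ≠ 0) :
    (Dop^[k + 1] (Vtheta t)) δ =
      exp (-((k + 1) ^ 2 * t)) * oddSphereHeatKernel k t (cos δ) := by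
  induction k generalizing δ with
  | zero =>
    rw [Function.iterate_one]
    refine Dop_eq_of_eq_comp_cos hδ (fun θ _ ↦ Vtheta_eq_circleHeatKernel ht θ) ?_
    simpa using hasDerivAt_circleHeatKernel ht (cos δ)
  | succ k ih =>
    rw [Function.iterate_succ_apply']
    refine Dop_eq_of_eq_comp_cos hδ
      (g := fun x ↦ exp (-((k + 1) ^ 2 * t)) * oddSphereHeatKernel k t x) (fun _ ↦ ih) ?_
    refine ((hasDerivAt_oddSphereHeatKernel k ht (cos δ)).const_mul _).congr_deriv ?_
    rw [show -(((k + 1 : ℕ) + 1 : ℝ) ^ 2 * t) = -((k + 1) ^ 2 * t) + -(2 * k + 3) * t by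
      push_cast; ring, exp_add]
    ring

lemma qS11_eq_oddSphereHeatKernel (t x : ℝ) : qS11 t x = oddSphereHeatKernel 4 t x := by
  have mode_eq (m : ℕ) : (oddSphereHeatMode 4 t m).eval x =
      (m + 5) * exp (-((m * (m + 10) : ℕ) : ℝ) * t) * geg5 m x := by
    rw [oddSphereHeatMode, eval_mul, eval_C, geg5_eq_eval_gegenbauer]
    push_cast
    ring_nf
  simp only [qS11, oddSphereHeatKernel, mode_eq]
  rw [← Gamma_nat_eq_factorial]
  norm_num

theorem qS11_eq_Dop_Vtheta_general (k : ℕ) {t δ : ℝ} (ht : 0 < t) (hδ : sin δ ≠ 0) :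
    oddSphereHeatKernel k t (cos δ) =
      exp ((k + 1) ^ 2 * t) * (Dop^[k + 1] (Vtheta t)) δ := by
  rw [iterate_Dop_Vtheta k ht hδ, ← mul_assoc, ← exp_add, add_neg_cancel, exp_zero, one_mul]

/-- The two classical expressions for the radial heat kernel of the round sphere `S^11` agree:
`q_t(cos δ) = e^{25t} D⁵ V(t,δ)` where `D = f ↦ −(1/(2π sin δ)) ∂f/∂δ` and
`V(t,δ) = (1/√(4πt)) Σ_{k∈ℤ} e^{−(δ−2kπ)²/(4t)}`. -/
theorem qS11_eq_Dop_Vtheta (t δ : ℝ) (ht : 0 < t) (hδ : δ ∈ Set.Ioo 0 π) :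
    qS11 t (Real.cos δ) = Real.exp (25 * t) * (Dop^[5] (Vtheta t)) δ := by
  rw [qS11_eq_oddSphereHeatKernel,
    qS11_eq_Dop_Vtheta_general 4 ht (sin_pos_of_mem_Ioo hδ).ne']
  norm_num
end
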